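/- arXiv:1608.05896 — 3 statements merged into one kernel-verified Lean document; each statement's English description precedes it below -/
import Mathlib

section
/- Edge-crossing equation (Snell–Descartes law) from first variation: Let F₁ and F₂ be Minkowski norms on ℝ², let v ∈ ℝ², and let a, b ∈ ℝ² be F₁-unit and F₂-unit respectively. If the function f : ℝ → ℝ defined by f(s) = F₁(a + s·v) + F₂(b − s·v) has a local minimum at s = 0, then ⟨a, v⟩_a^{F₁} = ⟨b, v⟩_b^{F₂}. -/
/-!
For a Minkowski norm `F` the differential `D(F²)` is positively homogeneous of degree one, so
Euler's relation gives `D²(F²)(y)(y, ·) = D(F²)(y) = 2 F(y) DF(y)`. Hence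
`⟨y, v⟩_y^F = F(y) · DF(y) v`, which is `DF(y) v` for an `F`-unit vector `y`
(`IsMinkowskiNorm.minkHess_self_left`). The function `s ↦ F₁(a + s v) + F₂(b - s v)` has derivative
`DF₁(a) v - DF₂(b) v` at `0`, and Fermat's theorem makes this vanish at a local minimum.
-/

/-- One half of the second Fréchet derivative of `F²` at `y`, evaluated at `(u, w)`:
the fundamental bilinear form `⟨u,w⟩_y^F` associated to a Minkowski norm. -/
noncomputable def minkHess {V : Type*} [NormedAddCommGroup V] [NormedSpace ℝ V]
    (F : V → ℝ) (y u w : V) : ℝ :=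
  (1 / 2) * fderiv ℝ (fun z => fderiv ℝ (fun x => F x ^ 2) z) y u w

/-- `F` is a Minkowski norm on `V`. -/
structure IsMinkowskiNorm {V : Type*} [NormedAddCommGroup V] [NormedSpace ℝ V]
    (F : V → ℝ) : Prop where
  continuous : Continuous F
  nonneg : ∀ y : V, 0 ≤ F y
  pos : ∀ y : V, y ≠ 0 → 0 < F y
  smooth : ContDiffOn ℝ (⊤ : ℕ∞) F {(0 : V)}ᶜ
  homog : ∀ l : ℝ, 0 ≤ l → ∀ y : V, F (l • y) = l * F y
  posdef : ∀ y : V, y ≠ 0 → ∀ u : V, u ≠ 0 → 0 < minkHess F y u u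

namespace IsMinkowskiNorm

variable {V : Type*} [NormedAddCommGroup V] [NormedSpace ℝ V] {F : V → ℝ}

theorem contDiffAt (hF : IsMinkowskiNorm F) {y : V} (hy : y ≠ 0) :
    ContDiffAt ℝ (⊤ : ℕ∞) F y :=
  hF.smooth.contDiffAt (isOpen_compl_singleton.mem_nhds hy)

theorem differentiableAt (hF : IsMinkowskiNorm F) {y : V} (hy : y ≠ 0) :
    DifferentiableAt ℝ F y :=
  (hF.contDiffAt hy).differentiableAt (by simp)

theorem ne_zero_of_unit (hF : IsMinkowskiNorm F) {y : V} (hy : F y = 1) : y ≠ 0 := by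
  rintro rfl
  have h := hF.homog 0 le_rfl 0
  simp [hy] at h

theorem fderiv_sq_smul (hF : IsMinkowskiNorm F) {l : ℝ} (hl : 0 < l) (y : V) :
    fderiv ℝ (fun x => F x ^ 2) (l • y) = l • fderiv ℝ (fun x => F x ^ 2) y := by
  have hG : (fun x => F (l • x) ^ 2) = fun x => l ^ 2 • F x ^ 2 := by
    funext x
    rw [hF.homog l hl.le x, smul_eq_mul, mul_pow]
  have h1 : fderiv ℝ (fun x => F (l • x) ^ 2) y = l • fderiv ℝ (fun x => F x ^ 2) (l • y) :=
    fderiv_comp_smul (f := fun x => F x ^ 2) l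
  have h2 : fderiv ℝ (fun x => l ^ 2 • F x ^ 2) y = l ^ 2 • fderiv ℝ (fun x => F x ^ 2) y :=
    congrFun (fderiv_const_smul_field (f := fun x => F x ^ 2) (l ^ 2)) y
  rw [hG, h2, pow_two, mul_smul] at h1
  exact (smul_right_injective _ hl.ne' h1).symm

/-- Euler's relation for the one-homogeneous map `y ↦ D(F²)(y)`. -/
theorem fderiv_fderiv_sq_self (hF : IsMinkowskiNorm F) {y : V} (hy : y ≠ 0) :
    fderiv ℝ (fun z => fderiv ℝ (fun x => F x ^ 2) z) y y = fderiv ℝ (fun x => F x ^ 2) y := by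
  have hd : DifferentiableAt ℝ (fderiv ℝ (fun x => F x ^ 2)) y :=
    (((hF.contDiffAt hy).pow 2).fderiv_right (m := 1) (WithTop.coe_le_coe.2 (le_top (a := (1 + 1 : ℕ∞))))
      ).differentiableAt (by simp)
  have hline : HasDerivAt (fun l : ℝ => l • y) y 1 := by
    simpa using (hasDerivAt_id (1 : ℝ)).smul_const y
  have hd' : HasFDerivAt (fderiv ℝ (fun x => F x ^ 2))
      (fderiv ℝ (fderiv ℝ (fun x => F x ^ 2)) y) ((1 : ℝ) • y) := by
    rw [one_smul]; exact hd.hasFDerivAt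
  have h1 := hd'.comp_hasDerivAt (1 : ℝ) hline
  have h2 : HasDerivAt (fun l : ℝ => l • fderiv ℝ (fun x => F x ^ 2) y)
      (fderiv ℝ (fun x => F x ^ 2) y) 1 := by
    simpa using (hasDerivAt_id (1 : ℝ)).smul_const (fderiv ℝ (fun x => F x ^ 2) y)
  refine h1.unique (h2.congr_of_eventuallyEq ?_)
  filter_upwards [lt_mem_nhds (zero_lt_one (α := ℝ))] with l hl
  exact hF.fderiv_sq_smul hl y

theorem minkHess_self_left (hF : IsMinkowskiNorm F) {y : V} (hy : F y = 1) (v : V) :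
    minkHess F y y v = fderiv ℝ F y v := by
  have hy0 := hF.ne_zero_of_unit hy
  have h := ((hF.differentiableAt hy0).hasFDerivAt.pow 2).fderiv
  rw [minkHess, hF.fderiv_fderiv_sq_self hy0]
  rw [h]
  simp [hy]

end IsMinkowskiNorm

/-- Edge-crossing equation (Snell–Descartes law) from first variation. -/
theorem edge_crossing_first_variation
    (F₁ F₂ : EuclideanSpace ℝ (Fin 2) → ℝ)
    (hF₁ : IsMinkowskiNorm F₁) (hF₂ : IsMinkowskiNorm F₂)
    (v a b : EuclideanSpace ℝ (Fin 2))
    (ha : F₁ a = 1) (hb : F₂ b = 1)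
    (hmin : IsLocalMin (fun s : ℝ => F₁ (a + s • v) + F₂ (b - s • v)) 0) :
    minkHess F₁ a a v = minkHess F₂ b b v := by
  rw [hF₁.minkHess_self_left ha, hF₂.minkHess_self_left hb]
  have hline : HasDerivAt (fun s : ℝ => s • v) v 0 := by
    simpa using (hasDerivAt_id (0 : ℝ)).smul_const v
  have d1 : HasFDerivAt F₁ (fderiv ℝ F₁ a) (a + (0 : ℝ) • v) := by
    rw [zero_smul, add_zero]
    exact (hF₁.differentiableAt (hF₁.ne_zero_of_unit ha)).hasFDerivAt
  have d2 : HasFDerivAt F₂ (fderiv ℝ F₂ b) (b - (0 : ℝ) • v) := by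
    rw [zero_smul, sub_zero]
    exact (hF₂.differentiableAt (hF₂.ne_zero_of_unit hb)).hasFDerivAt
  have h := hmin.hasDerivAt_eq_zero
    ((d1.comp_hasDerivAt (0 : ℝ) (hline.const_add a)).add
      (d2.comp_hasDerivAt (0 : ℝ) (hline.const_sub b)))
  rw [map_neg] at h
  linarith
end

section
/- Monotonicity of the refraction correspondence: Let F₁ and F₂ be Minkowski norms on ℝ², let v ∈ ℝ² be nonzero, and let φ : ℝ² → ℝ be a nonzero linear functional with φ(v) = 0. Let u₁⁻, u₂⁻ be F₁-unit vectors with φ(u₁⁻) > 0 and φ(u₂⁻) > 0, and let u₁⁺, u₂⁺ be F₂-unit vectors with φ(u₁⁺) > 0 and φ(u₂⁺) > 0, satisfying the edge-crossing equations ⟨u₁⁻, v⟩_{u₁⁻}^{F₁} = ⟨u₁⁺, v⟩_{u₁⁺}^{F₂} and ⟨u₂⁻, v⟩_{u₂⁻}^{F₁} = ⟨u₂⁺, v⟩_{u₂⁺}^{F₂}, with u₁⁻ ≠ u₂⁻. Then u₂⁻ is a positive linear combination of u₁⁻ and v if and only if u₂⁺ is a positive linear combination of u₁⁺ and v. -/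
section Minkowski

variable {V : Type*} [NormedAddCommGroup V] [NormedSpace ℝ V] {F : V → ℝ}

lemma IsMinkowskiNorm.contDiffAt_sq (hF : IsMinkowskiNorm F) {y : V} (hy : y ≠ 0) :
    ContDiffAt ℝ 2 (fun x => F x ^ 2) y :=
  (contDiffAt_infty.1 (hF.smooth.contDiffAt (isOpen_compl_singleton.mem_nhds hy)) 2).pow 2

lemma IsMinkowskiNorm.differentiableAt_fderiv_sq (hF : IsMinkowskiNorm F) {y : V} (hy : y ≠ 0) :
    DifferentiableAt ℝ (fun z => fderiv ℝ (fun x => F x ^ 2) z) y :=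
  ((hF.contDiffAt_sq hy).fderiv_right (m := 1) (by norm_num)).differentiableAt
    one_ne_zero

lemma IsMinkowskiNorm.fderiv_sq_smul_s2 (hF : IsMinkowskiNorm F) {c : ℝ} (hc : 0 < c) (y : V) :
    fderiv ℝ (fun x => F x ^ 2) (c • y) = c • fderiv ℝ (fun x => F x ^ 2) y := by
  have h1 : (fun x => F (c • x) ^ 2) = c ^ 2 • (fun x => F x ^ 2) := by
    funext x
    simp [hF.homog c hc.le x, mul_pow]
  have h2 := fderiv_comp_smul (𝕜 := ℝ) (f := fun x => F x ^ 2) (x := y) c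
  rw [h1, fderiv_const_smul_field, Pi.smul_apply, pow_two, mul_smul] at h2
  exact (smul_right_injective _ hc.ne' h2).symm

/-- Euler's identity for `F²`, which is homogeneous of degree two. -/
lemma IsMinkowskiNorm.fderiv_sq_self (hF : IsMinkowskiNorm F) {y : V} (hy : y ≠ 0) :
    fderiv ℝ (fun x => F x ^ 2) y y = 2 * F y ^ 2 := by
  have hd : HasFDerivAt (fun x => F x ^ 2) (fderiv ℝ (fun x => F x ^ 2) y) ((1 : ℝ) • y) := by
    rw [one_smul]
    exact ((hF.contDiffAt_sq hy).differentiableAt (by simp)).hasFDerivAt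
  have hl : HasDerivAt (fun c : ℝ => c • y) y 1 := by
    simpa using (hasDerivAt_id (1 : ℝ)).smul_const y
  have h1 : HasDerivAt (fun c : ℝ => F (c • y) ^ 2) (fderiv ℝ (fun x => F x ^ 2) y y) 1 :=
    HasFDerivAt.comp_hasDerivAt (l := fun x => F x ^ 2) (1 : ℝ) hd hl
  have h2 : HasDerivAt (fun c : ℝ => c ^ 2 * F y ^ 2) (2 * F y ^ 2) 1 := by
    simpa using (hasDerivAt_pow 2 (1 : ℝ)).mul_const (F y ^ 2)
  refine h1.unique (h2.congr_of_eventuallyEq ?_)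
  filter_upwards [lt_mem_nhds (zero_lt_one' ℝ)] with c hc
  rw [hF.homog c hc.le, mul_pow]

/-- Euler's identity for `D(F²)`, which is homogeneous of degree one. -/
lemma IsMinkowskiNorm.minkHess_self_left_s2 (hF : IsMinkowskiNorm F) {y : V} (hy : y ≠ 0) (w : V) :
    minkHess F y y w = (1 / 2) * fderiv ℝ (fun x => F x ^ 2) y w := by
  have hd : HasFDerivAt (fun z => fderiv ℝ (fun x => F x ^ 2) z)
      (fderiv ℝ (fun z => fderiv ℝ (fun x => F x ^ 2) z) y) ((1 : ℝ) • y) := by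
    rw [one_smul]
    exact (hF.differentiableAt_fderiv_sq hy).hasFDerivAt
  have hl : HasDerivAt (fun c : ℝ => c • y) y 1 := by
    simpa using (hasDerivAt_id (1 : ℝ)).smul_const y
  have h1 : HasDerivAt (fun c : ℝ => fderiv ℝ (fun x => F x ^ 2) (c • y))
      (fderiv ℝ (fun z => fderiv ℝ (fun x => F x ^ 2) z) y y) 1 :=
    hd.comp_hasDerivAt (1 : ℝ) hl
  have h2 : HasDerivAt (fun c : ℝ => c • fderiv ℝ (fun x => F x ^ 2) y)
      (fderiv ℝ (fun x => F x ^ 2) y) 1 := by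
    simpa using (hasDerivAt_id (1 : ℝ)).smul_const (fderiv ℝ (fun x => F x ^ 2) y)
  have h3 := h1.unique (h2.congr_of_eventuallyEq (by
    filter_upwards [lt_mem_nhds (zero_lt_one' ℝ)] with c hc
    exact hF.fderiv_sq_smul_s2 hc y))
  rw [minkHess, h3]

lemma IsMinkowskiNorm.minkHess_self_self (hF : IsMinkowskiNorm F) {y : V} (hy : y ≠ 0) :
    minkHess F y y y = F y ^ 2 := by
  rw [hF.minkHess_self_left_s2 hy, hF.fderiv_sq_self hy]
  ring

lemma IsMinkowskiNorm.minkHess_comm (hF : IsMinkowskiNorm F) {y : V} (hy : y ≠ 0) (u w : V) :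
    minkHess F y u w = minkHess F y w u := by
  have h : IsSymmSndFDerivAt ℝ (fun x => F x ^ 2) y :=
    (hF.contDiffAt_sq hy).isSymmSndFDerivAt (by
      simp)
  rw [minkHess, minkHess]
  exact congrArg _ (h.eq u w)

/-- Strict Cauchy–Schwarz inequality for `⟨·,·⟩_y`, with `y` itself as one of the two vectors. -/
lemma IsMinkowskiNorm.minkHess_sq_lt (hF : IsMinkowskiNorm F) {y v : V} (hy : y ≠ 0)
    (hv : ∀ c : ℝ, v ≠ c • y) :
    minkHess F y y v ^ 2 < minkHess F y v v * F y ^ 2 := by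
  have hpos := hF.pos y hy
  set B := minkHess F y y v with hB
  -- `v - (B / F(y)²) • y` is the component of `v` orthogonal to `y`.
  set c := B / F y ^ 2 with hc
  have hw := hF.posdef y hy (v - c • y) (sub_ne_zero.2 (hv c))
  have hexp : minkHess F y (v - c • y) (v - c • y)
      = minkHess F y v v - c * minkHess F y v y - c * minkHess F y y v
        + c ^ 2 * minkHess F y y y := by
    simp only [minkHess, map_sub, map_smul, sub_apply, smul_apply, smul_eq_mul]
    ring
  rw [hexp, hF.minkHess_comm hy v y, hF.minkHess_self_self hy, ← hB] at hw
  have hcB : c * F y ^ 2 = B := by rw [hc]; field_simp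
  have h2 := mul_pos hw (pow_pos hpos 2)
  have h3 : (minkHess F y v v - c * B - c * B + c ^ 2 * F y ^ 2) * F y ^ 2
      = minkHess F y v v * F y ^ 2 - 2 * B * (c * F y ^ 2) + (c * F y ^ 2) ^ 2 := by ring
  rw [h3, hcB] at h2
  nlinarith

/-- The derivative of `F` along a line that misses the origin is strictly increasing. -/
lemma IsMinkowskiNorm.strictMono_slope (hF : IsMinkowskiNorm F) {u v : V}
    (hv : ∀ t c : ℝ, v ≠ c • (u + t • v)) (hy : ∀ t : ℝ, u + t • v ≠ 0) :
    StrictMono fun t : ℝ =>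
      (1 / 2) * fderiv ℝ (fun x => F x ^ 2) (u + t • v) v / F (u + t • v) := by
  have hder (t : ℝ) : HasDerivAt (fun t : ℝ =>
      (1 / 2) * fderiv ℝ (fun x => F x ^ 2) (u + t • v) v / F (u + t • v))
      ((minkHess F (u + t • v) v v * F (u + t • v)
        - minkHess F (u + t • v) (u + t • v) v
          * (minkHess F (u + t • v) (u + t • v) v / F (u + t • v))) / F (u + t • v) ^ 2) t := by
    have hpos := hF.pos _ (hy t)
    have hl : HasDerivAt (fun t : ℝ => u + t • v) v t := by
      simpa using ((hasDerivAt_id t).smul_const v).const_add u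
    have hN : HasDerivAt (fun t : ℝ => (1 / 2) * fderiv ℝ (fun x => F x ^ 2) (u + t • v) v)
        (minkHess F (u + t • v) v v) t := by
      have h1 : HasDerivAt (fun t : ℝ => fderiv ℝ (fun x => F x ^ 2) (u + t • v))
          (fderiv ℝ (fun z => fderiv ℝ (fun x => F x ^ 2) z) (u + t • v) v) t :=
        HasFDerivAt.comp_hasDerivAt (l := fun z => fderiv ℝ (fun x => F x ^ 2) z) t
          (hF.differentiableAt_fderiv_sq (hy t)).hasFDerivAt hl
      have h2 := (h1.clm_apply (hasDerivAt_const t v)).const_mul (1 / 2)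
      rw [map_zero, add_zero] at h2
      exact h2
    have hFd : DifferentiableAt ℝ F (u + t • v) :=
      (hF.smooth.contDiffAt (isOpen_compl_singleton.mem_nhds (hy t))).differentiableAt (by simp)
    have hD : HasDerivAt (fun t : ℝ => F (u + t • v))
        (minkHess F (u + t • v) (u + t • v) v / F (u + t • v)) t := by
      refine (hFd.hasFDerivAt.comp_hasDerivAt t hl).congr_deriv ?_
      have hs : HasFDerivAt (fun x => F x ^ 2) _ (u + t • v) := hFd.hasFDerivAt.pow 2
      rw [hF.minkHess_self_left_s2 (hy t), hs.fderiv]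
      simp
      field_simp
    refine (hN.fun_div hD hpos.ne').congr_deriv ?_
    rw [hF.minkHess_self_left_s2 (hy t)]
  refine strictMono_of_hasDerivAt_pos hder fun t => ?_
  have hpos := hF.pos _ (hy t)
  have hCS := hF.minkHess_sq_lt (hy t) (hv t)
  refine div_pos ?_ (pow_pos hpos 2)
  rw [sub_pos, ← mul_div_assoc, div_lt_iff₀ hpos]
  nlinarith

end Minkowski

/-- On the half-plane `φ > 0`, the function `u ↦ ⟨u, v⟩_u` orders the unit vectors by direction. -/
lemma posComb_iff {F : EuclideanSpace ℝ (Fin 2) → ℝ} (hF : IsMinkowskiNorm F)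
    {v : EuclideanSpace ℝ (Fin 2)} (hv : v ≠ 0) {φ : EuclideanSpace ℝ (Fin 2) →ₗ[ℝ] ℝ}
    (hφv : φ v = 0) {u₁ u₂ : EuclideanSpace ℝ (Fin 2)} (hu₁ : F u₁ = 1) (hu₂ : F u₂ = 1)
    (hφ₁ : 0 < φ u₁) (hφ₂ : 0 < φ u₂) :
    (∃ a b : ℝ, 0 < a ∧ 0 < b ∧ u₂ = a • u₁ + b • v) ↔
      minkHess F u₁ u₁ v < minkHess F u₂ u₂ v := by
  have hne {y : EuclideanSpace ℝ (Fin 2)} (h : 0 < φ y) : y ≠ 0 := by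
    rintro rfl
    simp at h
  have hφt (t : ℝ) : 0 < φ (u₁ + t • v) := by simpa [hφv] using hφ₁
  have hmono := hF.strictMono_slope (u := u₁) (v := v) (fun t c h => by
    have h1 := congrArg φ h
    rw [hφv, map_smul, smul_eq_mul] at h1
    have hc : c = 0 := (mul_eq_zero.1 h1.symm).resolve_right (hφt t).ne'
    rw [hc, zero_smul] at h
    exact hv h) (fun t => hne (hφt t))
  have key {a b : ℝ} (ha : 0 < a) (h : u₂ = a • u₁ + b • v) :
      0 < b ↔ minkHess F u₁ u₁ v < minkHess F u₂ u₂ v := by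
    have hs : u₂ = a • (u₁ + (b / a) • v) := by
      rw [h, smul_add, smul_smul, mul_div_cancel₀ _ ha.ne']
    have hFa : a * F (u₁ + (b / a) • v) = 1 := by rw [← hF.homog a ha.le, ← hs, hu₂]
    have hlt := hmono.lt_iff_lt (a := 0) (b := b / a)
    have e1 : minkHess F u₁ u₁ v = (1 / 2) * fderiv ℝ (fun x => F x ^ 2) (u₁ + (0 : ℝ) • v) v
        / F (u₁ + (0 : ℝ) • v) := by
      rw [zero_smul, add_zero, hu₁, div_one, hF.minkHess_self_left_s2 (hne hφ₁)]
    have e2 : minkHess F u₂ u₂ v = (1 / 2) * fderiv ℝ (fun x => F x ^ 2) (u₁ + (b / a) • v) v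
        / F (u₁ + (b / a) • v) := by
      rw [hF.minkHess_self_left_s2 (hne hφ₂), hs, hF.fderiv_sq_smul_s2 ha,
        eq_div_iff (hF.pos _ (hne (hφt _))).ne', smul_apply, smul_eq_mul]
      linear_combination (1 / 2) * fderiv ℝ (fun x => F x ^ 2) (u₁ + (b / a) • v) v * hFa
    rw [e1, e2, hlt, div_pos_iff_of_pos_right ha]
  constructor
  · rintro ⟨a, b, ha, hb, h⟩
    exact (key ha h).1 hb
  · intro hlt
    -- The coefficient of `u₁` is forced by applying `φ`.
    have ha : 0 < φ u₂ / φ u₁ := div_pos hφ₂ hφ₁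
    have hker : Module.finrank ℝ (LinearMap.ker φ) = 1 := by
      have h1 := LinearMap.finrank_range_add_finrank_ker φ
      have h2 : LinearMap.range φ = ⊤ := LinearMap.range_eq_top.2
        (LinearMap.surjective (fun h => by simp [h] at hφ₁))
      rw [h2, finrank_top, Module.finrank_self, finrank_euclideanSpace_fin] at h1
      omega
    have hv' : (⟨v, hφv⟩ : LinearMap.ker φ) ≠ 0 := fun h => hv (congrArg Subtype.val h)
    have hmem : φ (u₂ - (φ u₂ / φ u₁) • u₁) = 0 := by
      rw [map_sub, map_smul, smul_eq_mul, div_mul_cancel₀ _ hφ₁.ne', sub_self]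
    obtain ⟨b, hb⟩ := (finrank_eq_one_iff_of_nonzero' _ hv').1 hker ⟨_, hmem⟩
    have hb' : b • v = u₂ - (φ u₂ / φ u₁) • u₁ := congrArg Subtype.val hb
    have h : u₂ = (φ u₂ / φ u₁) • u₁ + b • v := by rw [hb']; abel
    exact ⟨_, b, ha, (key ha h).2 hlt, h⟩

/-- Monotonicity of the refraction correspondence. -/
theorem refraction_monotonicity
    (F₁ F₂ : EuclideanSpace ℝ (Fin 2) → ℝ)
    (hF₁ : IsMinkowskiNorm F₁) (hF₂ : IsMinkowskiNorm F₂)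
    (v : EuclideanSpace ℝ (Fin 2)) (hv : v ≠ 0)
    (φ : EuclideanSpace ℝ (Fin 2) →ₗ[ℝ] ℝ) (hφ : φ ≠ 0) (hφv : φ v = 0)
    (u₁m u₂m u₁p u₂p : EuclideanSpace ℝ (Fin 2))
    (hu₁m : F₁ u₁m = 1) (hu₂m : F₁ u₂m = 1)
    (hu₁p : F₂ u₁p = 1) (hu₂p : F₂ u₂p = 1)
    (hφ₁m : 0 < φ u₁m) (hφ₂m : 0 < φ u₂m)
    (hφ₁p : 0 < φ u₁p) (hφ₂p : 0 < φ u₂p)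
    (hcross₁ : minkHess F₁ u₁m u₁m v = minkHess F₂ u₁p u₁p v)
    (hcross₂ : minkHess F₁ u₂m u₂m v = minkHess F₂ u₂p u₂p v)
    (hne : u₁m ≠ u₂m) :
    (∃ a b : ℝ, 0 < a ∧ 0 < b ∧ u₂m = a • u₁m + b • v) ↔
      (∃ a b : ℝ, 0 < a ∧ 0 < b ∧ u₂p = a • u₁p + b • v) := by
  rw [posComb_iff hF₁ hv hφv hu₁m hu₂m hφ₁m hφ₂m,
    posComb_iff hF₂ hv hφv hu₁p hu₂p hφ₁p hφ₂p, hcross₁, hcross₂]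
end

section
/- Strict convexity of a Minkowski norm along non-radial lines: Let F be a Minkowski norm on a finite-dimensional real normed space V, and let a, v ∈ V be linearly independent. Then the function s ↦ F(a + s·v) is strictly convex on ℝ; in particular, for all s₁ ≠ s₂ one has F(a + s₁·v) + F(a + s₂·v) > 2·F(a + ((s₁ + s₂)/2)·v). -/
/-- Strict convexity of `F²` along lines avoiding the origin: the second derivative of
`t ↦ F (p + t • w) ^ 2` is twice the fundamental form evaluated at `(w, w)`. -/
lemma IsMinkowskiNorm.strictConvexOn_sq_line {V : Type*} [NormedAddCommGroup V] [NormedSpace ℝ V]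
    {F : V → ℝ} (hF : IsMinkowskiNorm F) {p w : V} (hw : w ≠ 0)
    (hp : ∀ t : ℝ, p + t • w ≠ 0) :
    StrictConvexOn ℝ Set.univ (fun t : ℝ => F (p + t • w) ^ 2) := by
  have hline : ∀ t : ℝ, HasDerivAt (fun t : ℝ => p + t • w) w t := fun t => by
    simpa using ((hasDerivAt_id t).smul_const w).const_add p
  have hG : ∀ z : V, z ≠ 0 → ContDiffAt ℝ 2 (fun x => F x ^ 2) z := fun z hz =>
    (((hF.smooth.contDiffAt (isOpen_compl_singleton.mem_nhds hz)).of_le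
      (WithTop.coe_le_coe.2 (le_top : (2 : ℕ∞) ≤ ⊤))).pow 2)
  have hd1 : deriv (fun t : ℝ => F (p + t • w) ^ 2)
      = fun t => fderiv ℝ (fun x => F x ^ 2) (p + t • w) w := by
    funext t
    have h := ((hG _ (hp t)).differentiableAt (by norm_num)).hasFDerivAt
    exact (h.comp_hasDerivAt t (hline t)).deriv
  have hd2 : ∀ t, deriv (fun t : ℝ => fderiv ℝ (fun x => F x ^ 2) (p + t • w) w) t
      = fderiv ℝ (fun z => fderiv ℝ (fun x => F x ^ 2) z) (p + t • w) w w := by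
    intro t
    have h := (((hG _ (hp t)).fderiv_right (m := 1) (by norm_num)).differentiableAt
      (by norm_num)).hasFDerivAt
    have h2 : HasDerivAt (fun t : ℝ => fderiv ℝ (fun x => F x ^ 2) (p + t • w)) _ t :=
      h.comp_hasDerivAt t (hline t)
    exact ((ContinuousLinearMap.apply ℝ ℝ w).hasFDerivAt.comp_hasDerivAt t h2).deriv
  refine strictConvexOn_univ_of_deriv2_pos ?_ fun t => ?_
  · exact (hF.continuous.comp (by fun_prop)).pow 2
  · have h := hF.posdef _ (hp t) w hw
    rw [minkHess] at h
    simp only [Function.iterate_succ, Function.iterate_zero, Function.comp, id]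
    rw [hd1, hd2]
    linarith

/-- The strict triangle inequality for linearly independent vectors. -/
lemma IsMinkowskiNorm.add_lt {V : Type*} [NormedAddCommGroup V] [NormedSpace ℝ V]
    {F : V → ℝ} (hF : IsMinkowskiNorm F) {x y : V} (h : LinearIndependent ℝ ![x, y]) :
    F (x + y) < F x + F y := by
  have hx := hF.pos x (h.ne_zero 0)
  have hy := hF.pos y (h.ne_zero 1)
  rw [LinearIndependent.pair_iff] at h
  have hsum : 0 < F x + F y := by positivity
  set w : V := (F y)⁻¹ • y - (F x)⁻¹ • x with hw
  have hw0 : w ≠ 0 := fun h0 => by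
    have := (h (-(F x)⁻¹) (F y)⁻¹ (by rw [← h0, hw]; module)).2
    exact (inv_pos.2 hy).ne' this
  have hp : ∀ t : ℝ, (F x)⁻¹ • x + t • w ≠ 0 := fun t h0 => by
    obtain ⟨h1, h2⟩ := h ((1 - t) * (F x)⁻¹) (t * (F y)⁻¹) (by rw [← h0, hw]; module)
    have h3 : t = 0 := (mul_eq_zero.1 h2).resolve_right (inv_pos.2 hy).ne'
    have h4 : 1 - t = 0 := (mul_eq_zero.1 h1).resolve_right (inv_pos.2 hx).ne'
    linarith
  have key := (hF.strictConvexOn_sq_line hw0 hp).2 (Set.mem_univ 0) (Set.mem_univ 1) zero_ne_one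
    (div_pos hx hsum) (div_pos hy hsum) (by field_simp)
  have e0 : F ((F x)⁻¹ • x + (0 : ℝ) • w) = 1 := by
    rw [zero_smul, add_zero, hF.homog _ (inv_pos.2 hx).le, inv_mul_cancel₀ hx.ne']
  have e1 : F ((F x)⁻¹ • x + (1 : ℝ) • w) = 1 := by
    rw [one_smul, hw, add_sub_cancel, hF.homog _ (inv_pos.2 hy).le, inv_mul_cancel₀ hy.ne']
  have em : (F x)⁻¹ • x + ((F x / (F x + F y)) • (0 : ℝ) + (F y / (F x + F y)) • (1 : ℝ)) • w
      = (F x + F y)⁻¹ • (x + y) := by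
    rw [hw]
    match_scalars <;> simp <;> field_simp <;> ring
  simp only [e0, e1, em, hF.homog _ (inv_pos.2 hsum).le] at key
  have hone : (F x / (F x + F y)) • (1 : ℝ) ^ 2 + (F y / (F x + F y)) • (1 : ℝ) ^ 2 = 1 := by
    simp; field_simp
  rw [hone, sq_lt_one_iff₀ (mul_nonneg (inv_pos.2 hsum).le (hF.nonneg _)),
    inv_mul_lt_one₀ hsum] at key
  exact key

/-- Strict convexity of a Minkowski norm along non-radial lines. -/
theorem minkowski_strict_convex_along_line
    {V : Type*} [NormedAddCommGroup V] [NormedSpace ℝ V] [FiniteDimensional ℝ V]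
    (F : V → ℝ) (hF : IsMinkowskiNorm F)
    (a v : V) (hav : LinearIndependent ℝ ![a, v]) :
    StrictConvexOn ℝ Set.univ (fun s : ℝ => F (a + s • v)) ∧
      ∀ s₁ s₂ : ℝ, s₁ ≠ s₂ →
        2 * F (a + ((s₁ + s₂) / 2) • v) < F (a + s₁ • v) + F (a + s₂ • v) := by
  have hconv : StrictConvexOn ℝ Set.univ (fun s : ℝ => F (a + s • v)) := by
    refine ⟨convex_univ, fun s _ t _ hst c d hc hd hcd => ?_⟩
    have hind : LinearIndependent ℝ ![c • (a + s • v), d • (a + t • v)] := by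
      rw [LinearIndependent.pair_iff] at hav ⊢
      intro α β h0
      obtain ⟨h1, h2⟩ := hav (α * c + β * d) (α * c * s + β * d * t) (by rw [← h0]; module)
      have h3 : α * c * (s - t) = 0 := by linear_combination h2 - t * h1
      have h4 : α * c = 0 := (mul_eq_zero.1 h3).resolve_right (sub_ne_zero.2 hst)
      have h5 : β * d = 0 := by linarith
      exact ⟨(mul_eq_zero.1 h4).resolve_right hc.ne', (mul_eq_zero.1 h5).resolve_right hd.ne'⟩
    have h := hF.add_lt hind
    rw [hF.homog c hc.le, hF.homog d hd.le] at h
    have e : a + (c • s + d • t) • v = c • (a + s • v) + d • (a + t • v) := by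
      obtain rfl : d = 1 - c := by linarith
      simp only [smul_eq_mul]
      module
    simp only [e]
    simpa only [smul_eq_mul] using h
  refine ⟨hconv, fun s₁ s₂ hs => ?_⟩
  have h := hconv.2 (Set.mem_univ s₁) (Set.mem_univ s₂) hs
    (by norm_num : (0 : ℝ) < 1 / 2) (by norm_num : (0 : ℝ) < 1 / 2) (by norm_num)
  have e : (1 / 2 : ℝ) • s₁ + (1 / 2 : ℝ) • s₂ = (s₁ + s₂) / 2 := by
    simp only [smul_eq_mul]; ring
  simp only [e] at h
  simp only [smul_eq_mul] at h
  linarith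
end
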